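/- Let R be an equicodimensional noetherian ring which is a finite module over its center Z(R) and is Z(R)-Macaulay. Then R is Krull homogeneous: every nonzero right or left ideal I of R satisfies Kdim(I) = Kdim(R). -/

import Mathlib

/-- A two-sided ideal of a (possibly noncommutative) ring is prime. -/
def IsPrimeTS {R : Type*} [Ring R] (P : TwoSidedIdeal R) : Prop :=
  P ≠ ⊤ ∧ ∀ a b : R, (∀ r : R, a * r * b ∈ P) → a ∈ P ∨ b ∈ P

/-- Height of an element `P` in a poset with respect to a predicate (`prime`):
the supremum of lengths of strictly increasing chains of elements satisfying the
predicate and ending at `P`. -/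
noncomputable def primeChainHeight {α : Type*} [Preorder α] (isP : α → Prop) (P : α) : ℕ∞ :=
  sSup {n : ℕ∞ | ∃ m : ℕ, n = (m : ℕ∞) ∧ ∃ f : Fin (m + 1) → α,
    StrictMono f ∧ (∀ i, isP (f i)) ∧ f (Fin.last m) = P}

/-- Height (codimension) of a two-sided ideal: the supremum of lengths of chains of
prime two-sided ideals descending from it. -/
noncomputable def tsHeight {R : Type*} [Ring R] (P : TwoSidedIdeal R) : ℕ∞ :=
  primeChainHeight IsPrimeTS P

/-- Height of an ideal of a commutative ring. -/
noncomputable def cHeight {C : Type*} [CommRing C] (p : Ideal C) : ℕ∞ :=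
  primeChainHeight Ideal.IsPrime p

/-- Contraction `P ∩ C` of a two-sided ideal of `R` to the central subring `C`
(given via the algebra structure map, whose image is central). -/
def contractTS {C R : Type*} [CommRing C] [Ring R] [Algebra C R]
    (P : TwoSidedIdeal R) : Ideal C :=
  Ideal.comap (algebraMap C R) (TwoSidedIdeal.asIdeal P)

/-- A two-sided ideal is maximal. -/
def IsMaximalTS {R : Type*} [Ring R] (M : TwoSidedIdeal R) : Prop :=
  M ≠ ⊤ ∧ ∀ J : TwoSidedIdeal R, M < J → J = ⊤

/-- Krull dimension of a (possibly noncommutative) ring: the supremum of the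
heights of its prime two-sided ideals. -/
noncomputable def tsKdim (R : Type*) [Ring R] : ℕ∞ :=
  ⨆ P : {P : TwoSidedIdeal R // IsPrimeTS P}, tsHeight P.1

/-- Krull dimension of a commutative ring: the supremum of heights of primes. -/
noncomputable def cKdim (C : Type*) [CommRing C] : ℕ∞ :=
  ⨆ p : {p : Ideal C // p.IsPrime}, cHeight p.1

/-- The grade `G_C(I, M)`: the supremum of the lengths of `M`-regular sequences
consisting of elements of the ideal `I`. -/
noncomputable def cGrade {C : Type*} [CommRing C] (I : Ideal C) (M : Type*)
    [AddCommGroup M] [Module C M] : ℕ∞ :=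
  sSup {n : ℕ∞ | ∃ rs : List C, n = rs.length ∧ (∀ x ∈ rs, x ∈ I) ∧
    RingTheory.Sequence.IsRegular M rs}

/-- `M` is a maximal Cohen-Macaulay `C`-module: for every maximal ideal `m` of `C`,
the `m`-grade of `M` equals the height of `m` (that is, `Kdim (C_m)`). -/
def IsMaximalCohenMacaulay (C : Type*) [CommRing C] (M : Type*)
    [AddCommGroup M] [Module C M] : Prop :=
  ∀ m : Ideal C, m.IsMaximal → cGrade m M = cHeight m

open Filter in
/-- `DevLE n a b` : the deviation (in the sense of Gabriel–Rentschler) of the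
interval `[a, b]` in a poset is at most `n`. -/
def DevLE {α : Type*} [Preorder α] : ℕ → α → α → Prop
  | 0, a, b => ∀ f : ℕ → α, Antitone f → (∀ i, a ≤ f i) → f 0 ≤ b →
      ∀ᶠ i in atTop, f (i + 1) = f i
  | n + 1, a, b => ∀ f : ℕ → α, Antitone f → (∀ i, a ≤ f i) → f 0 ≤ b →
      ∀ᶠ i in atTop, DevLE n (f (i + 1)) (f i)

/-- The Krull dimension (Gabriel–Rentschler deviation of the submodule lattice)
of a module, valued in `ℕ∞`. -/
noncomputable def moduleKdim (R M : Type*) [Ring R] [AddCommGroup M] [Module R M] : ℕ∞ :=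
  sInf {n : ℕ∞ | ∃ m : ℕ, n = m ∧ DevLE m (⊥ : Submodule R M) ⊤}

/-!
By Eakin–Nagata for modules, the centre `Z` of `R` is noetherian. The Krull dimension of a
`Z`-finite module `N` over a `Z`-algebra is the supremum of the coheights of the primes in its
support over `Z`. For `p ∈ Ass N` with `N ⊆ R` nonzero, and `m ⊇ p` maximal, a regular
sequence in `m` produces a chain of primes above `p`, so `coheight p ≥ grade (m, R) = ht m`.
Incomparability for `Z ⊆ R` and equicodimensionality give `ht m ≥ ht M = Kdim R` for a maximal
ideal `M` of `R` over `m`, while going up gives `coheight q ≤ Kdim R` for every prime `q` in the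
support of `R`. Hence every such `N` has Krull dimension `Kdim R`.
-/

section Deviation

open Filter

/-- `DevLT n a b`: the deviation of the interval `[a, b]` is smaller than `n`, where a trivial
interval has deviation `-∞`. Shifting `DevLE` by one lets inductions start at `a = b`. -/
def DevLT {α : Type*} [Preorder α] : ℕ → α → α → Prop
  | 0, a, b => a = b
  | n + 1, a, b => ∀ f : ℕ → α, Antitone f → (∀ i, a ≤ f i) → f 0 ≤ b →
      ∀ᶠ i in atTop, DevLT n (f (i + 1)) (f i)

theorem devLT_succ_iff_devLE {α : Type*} [Preorder α] {n : ℕ} {a b : α} :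
    DevLT (n + 1) a b ↔ DevLE n a b := by
  induction n generalizing a b with
  | zero => exact forall_congr' fun f => by simp only [DevLT]
  | succ n ih => rw [DevLE, DevLT]; simp only [ih]

theorem DevLT.refl {α : Type*} [PartialOrder α] (n : ℕ) (a : α) : DevLT n a a := by
  induction n generalizing a with
  | zero => rfl
  | succ n ih =>
    intro f hf ha hb
    have hconst : ∀ i, f i = a := fun i => le_antisymm ((hf (Nat.zero_le i)).trans hb) (ha i)
    simp only [hconst]
    exact .of_forall fun _ => ih a

theorem DevLT.of_map {α β : Type*} [Preorder α] [Preorder β] {φ : α → β} (hφ : Monotone φ)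
    {n : ℕ} {a b : α} (hab : a ≤ b)
    (hinj : ∀ x y, a ≤ x → x ≤ y → y ≤ b → φ x = φ y → x = y)
    (h : DevLT n (φ a) (φ b)) : DevLT n a b := by
  induction n generalizing a b with
  | zero => exact hinj a b le_rfl hab le_rfl h
  | succ n ih =>
    intro f hf ha hb
    filter_upwards [h (φ ∘ f) (hφ.comp_antitone hf) (fun i => hφ (ha i)) (hφ hb)] with i hi
    refine ih (hf i.le_succ) (fun x y hx hxy hy => ?_) hi
    exact hinj x y ((ha _).trans hx) hxy (hy.trans ((hf i.zero_le).trans hb))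

section Modular

variable {α : Type*} [Lattice α] [IsModularLattice α] {n : ℕ} {a b c : α}

theorem DevLT.of_inf (hab : a ≤ b) (hb : b ≤ a ⊔ c) (h : DevLT n (a ⊓ c) (b ⊓ c)) :
    DevLT n a b := by
  refine .of_map (φ := (· ⊓ c)) (fun x y hxy => inf_le_inf_right c hxy) hab ?_ h
  intro x y hax hxy hyb hinf
  refine eq_of_le_of_inf_le_of_sup_le (z := c) hxy hinf.ge ?_
  exact sup_le ((hyb.trans hb).trans (sup_le_sup_right hax c)) le_sup_right

theorem DevLT.of_sup (hab : a ≤ b) (ha : b ⊓ c ≤ a) (h : DevLT n (a ⊔ c) (b ⊔ c)) :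
    DevLT n a b := by
  refine .of_map (φ := (· ⊔ c)) (fun x y hxy => sup_le_sup_right hxy c) hab ?_ h
  intro x y hax hxy hyb hsup
  refine eq_of_le_of_inf_le_of_sup_le (z := c) hxy ?_ hsup.ge
  exact le_inf (((inf_le_inf_right c hyb).trans ha).trans hax) inf_le_right

theorem DevLT.trans (hab : a ≤ b) (hbc : b ≤ c) (h₁ : DevLT n a b) (h₂ : DevLT n b c) :
    DevLT n a c := by
  induction n generalizing a b c with
  | zero => exact Eq.trans h₁ h₂
  | succ n ih =>
    intro f hf ha hc
    have hinf := h₁ (fun i => f i ⊓ b) (fun i j hij => inf_le_inf_right b (hf hij))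
      (fun i => le_inf (ha i) hab) inf_le_right
    have hsup := h₂ (fun i => f i ⊔ b) (fun i j hij => sup_le_sup_right (hf hij) b)
      (fun i => le_sup_right) (sup_le hc hbc)
    filter_upwards [hinf, hsup] with i hinf hsup
    have hmid : f (i + 1) ⊔ f i ⊓ b ≤ f i := sup_le (hf i.le_succ) inf_le_left
    refine ih le_sup_left hmid (.of_inf (c := b) le_sup_left ?_ ?_) (.of_sup (c := b) hmid ?_ ?_)
    · exact sup_le_sup_left inf_le_right _
    · rwa [le_antisymm (inf_le_inf_right b hmid) (le_inf le_sup_right inf_le_right)]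
    · exact le_sup_right
    · rwa [sup_assoc, sup_eq_right.2 (inf_le_right : f i ⊓ b ≤ b)]

end Modular

end Deviation

section Support

variable {Z : Type*} [CommRing Z]

section Upper

variable {M : Type*} [AddCommGroup M] [Module Z M] {a b : Submodule Z M}

theorem exists_isPrime_colon_singleton [IsNoetherianRing Z] (h : ¬ b ≤ a) :
    ∃ y ∈ b, (a.colon {y}).IsPrime := by
  obtain ⟨x, hx, hxa⟩ := SetLike.not_le_iff_exists.1 h
  obtain ⟨p, hp, -⟩ := exists_le_isAssociatedPrime_of_isNoetherianRing (R := Z)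
    (M := b.map a.mkQ) ⟨a.mkQ x, Submodule.mem_map_of_mem hx⟩ (by simpa using hxa)
  obtain ⟨hprime, ⟨_, y, hy, rfl⟩, rfl⟩ := isAssociatedPrime_iff.1 hp
  refine ⟨y, hy, ?_⟩
  convert hprime using 1
  ext z
  rw [Submodule.mem_colon_singleton, Submodule.mem_colon_singleton, Submodule.mem_bot,
    Subtype.ext_iff]
  simp [← Submodule.Quotient.mk_smul]

theorem colon_singleton_lt {y : M} {c d : Submodule Z M} (hac : a < c)
    (hcd : c ≤ d) (hd : d ≤ a ⊔ Z ∙ y) {q : Ideal Z} (hq : c.colon (d : Set M) ≤ q) :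
    a.colon {y} < q := by
  have hcq : c.colon {y} ≤ q := by
    refine le_trans (fun z hz => Submodule.mem_colon.2 fun x hx => ?_) hq
    obtain ⟨u, hu, v, hv, rfl⟩ := Submodule.mem_sup.1 (hd hx)
    obtain ⟨r, rfl⟩ := Submodule.mem_span_singleton.1 hv
    rw [smul_add, smul_comm]
    exact add_mem (c.smul_mem _ (hac.le hu)) (c.smul_mem _ (Submodule.mem_colon_singleton.1 hz))
  obtain ⟨w, hw, hwa⟩ := SetLike.exists_of_lt hac
  obtain ⟨u, hu, v, hv, rfl⟩ := Submodule.mem_sup.1 (hd (hcd hw))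
  obtain ⟨r, rfl⟩ := Submodule.mem_span_singleton.1 hv
  have hrc : r ∈ c.colon {y} :=
    Submodule.mem_colon_singleton.2 ((add_mem_cancel_left (hac.le hu)).1 hw)
  refine SetLike.lt_iff_le_and_exists.2 ⟨?_, r, hcq hrc, fun hra => hwa ?_⟩
  · exact (Submodule.colon_mono hac.le le_rfl).trans hcq
  · exact add_mem hu (Submodule.mem_colon_singleton.1 hra)

theorem devLT_of_coheight_lt [IsNoetherianRing Z] [IsNoetherian Z M] {n : ℕ} (hab : a ≤ b)
    (h : ∀ q : PrimeSpectrum Z, a.colon (b : Set M) ≤ q.asIdeal → Order.coheight q < n) :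
    DevLT n a b := by
  induction n generalizing a b with
  | zero =>
    refine hab.antisymm ((Submodule.colon_eq_top_iff_subset _).1 ?_)
    by_contra hne
    obtain ⟨m, hm, hle⟩ := Ideal.exists_le_maximal _ hne
    exact not_lt_zero (h ⟨m, hm.isPrime⟩ hle)
  | succ n ih =>
    induction a using WellFoundedGT.induction with
    | ind a iha =>
    by_cases hba : b ≤ a
    · rw [hba.antisymm hab]
      exact .refl _ _
    obtain ⟨y, hyb, hp⟩ := exists_isPrime_colon_singleton hba
    have hya : y ∉ a := fun hy => hp.ne_top ((Submodule.colon_eq_top_iff_subset _).2 (by simpa))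
    have hlt : a < a ⊔ Z ∙ y := by simpa using hya
    have hle : a ⊔ Z ∙ y ≤ b := sup_le hab (by simpa using hyb)
    refine .trans hlt.le hle (fun f hf hfa hfb => ?_) (iha _ hlt hle fun q hq => h q ?_)
    · by_cases hbot : ∃ i, f i = a
      · obtain ⟨i, hi⟩ := hbot
        filter_upwards [Filter.eventually_ge_atTop i] with j hj
        have hconst : ∀ k, i ≤ k → f k = a := fun k hk => ((hf hk).trans hi.le).antisymm (hfa k)
        rw [hconst j hj, hconst (j + 1) (by omega)]
        exact .refl _ _
      · refine .of_forall fun i => ih (hf i.le_succ) fun q hq => ?_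
        have hpq : (⟨_, hp⟩ : PrimeSpectrum Z) < q := colon_singleton_lt
          ((hfa _).lt_of_ne' fun e => hbot ⟨_, e⟩) (hf i.le_succ) ((hf i.zero_le).trans hfb) hq
        have hpn := h ⟨_, hp⟩ (Submodule.colon_mono le_rfl (by simpa using hyb))
        have hadd := (Order.coheight_add_one_le hpq).trans_lt hpn
        push_cast at hadd
        exact lt_of_add_lt_add_right hadd
    · exact (Submodule.colon_mono hlt.le le_rfl).trans hq

theorem colon_sup_smul_le (hb : b.FG) {q I : Ideal Z} [q.IsPrime] (hIq : I ≤ q)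
    (hab : a.colon (b : Set M) ≤ q) : (a ⊔ I • b).colon (b : Set M) ≤ q := by
  let N : Submodule Z (M ⧸ a) := b.map a.mkQ
  have : Module.Finite Z N := .of_fg (hb.map _)
  have hq : (⟨q, ‹_›⟩ : PrimeSpectrum Z) ∈ Module.support Z (N ⧸ I • (⊤ : Submodule Z N)) := by
    rw [Module.support_quotient]
    refine ⟨Module.mem_support_iff_of_finite.2 ?_, hIq⟩
    exact Submodule.annihilator_map_mkQ_eq_colon.trans_le hab
  refine le_trans (fun t ht => ?_) (Module.annihilator_le_of_mem_support hq)
  rw [Submodule.annihilator_quotient, Submodule.mem_colon]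
  rintro ⟨_, y, hy, rfl⟩ -
  obtain ⟨u, hu, w, hw, huw⟩ := Submodule.mem_sup.1 (Submodule.mem_colon.1 ht y hy)
  have hsub : (I • (⊤ : Submodule Z N)).map N.subtype = (I • b).map a.mkQ := by
    rw [Submodule.map_smul'', Submodule.map_smul'', Submodule.map_subtype_top]
  obtain ⟨v, hv, hvw⟩ := hsub.ge (Submodule.mem_map_of_mem hw)
  suffices t • (⟨a.mkQ y, Submodule.mem_map_of_mem hy⟩ : N) = v from this ▸ hv
  refine Subtype.ext (Eq.trans ?_ hvw.symm)
  have hu0 : a.mkQ u = 0 := (Submodule.Quotient.mk_eq_zero a).2 hu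
  change a.mkQ (t • y) = a.mkQ w
  rw [← huw, map_add, hu0, zero_add]

end Upper

section Lower

open Pointwise

variable {A M : Type*} [Ring A] [Algebra Z A] [AddCommGroup M] [Module Z M] [Module A M]
  [IsScalarTower Z A M]

theorem restrictScalars_sup_pow_succ_smul [SMulCommClass Z A M] (a b : Submodule A M) (s : Z)
    (i : ℕ) :
    (a ⊔ s ^ (i + 1) • b).restrictScalars Z =
      a.restrictScalars Z ⊔ Ideal.span {s} • (a ⊔ s ^ i • b).restrictScalars Z := by
  have hsmul : s • (a ⊔ s ^ i • b).restrictScalars Z =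
      (s • (a ⊔ s ^ i • b)).restrictScalars Z := rfl
  have hsa : s • a ≤ a := Submodule.smul_le_self_of_tower _ _
  rw [Submodule.ideal_span_singleton_smul, hsmul, Submodule.smul_sup', smul_smul, ← pow_succ',
    ← Submodule.restrictScalars_sup, ← sup_assoc, sup_eq_left.2 hsa]

theorem antitone_sup_pow_smul [SMulCommClass Z A M] (a b : Submodule A M) (s : Z) :
    Antitone fun i : ℕ => a ⊔ s ^ i • b := by
  refine antitone_nat_of_succ_le fun i => sup_le_sup_left ?_ a
  rw [pow_succ', mul_smul]
  exact Submodule.smul_le_self_of_tower _ _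

theorem colon_sup_pow_smul_le [SMulCommClass Z A M] {a b : Submodule A M} {q : Ideal Z}
    [hq : q.IsPrime] (hab : (a.restrictScalars Z).colon (b : Set M) ≤ q) {s : Z} (hs : s ∉ q)
    (i : ℕ) : (a.restrictScalars Z).colon ((a ⊔ s ^ i • b : Submodule A M) : Set M) ≤ q := by
  intro z hz
  have hzs : z * s ^ i ∈ q := hab <| Submodule.mem_colon.2 fun x hx => by
    rw [mul_smul]
    exact Submodule.mem_colon.1 hz _
      (Submodule.mem_sup_right (Submodule.smul_mem_pointwise_smul _ _ _ hx))
  exact (hq.mem_or_mem hzs).resolve_right fun h => hs (hq.mem_of_pow_mem _ h)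

theorem coheight_lt_of_devLT [IsNoetherian Z M] {n : ℕ} {a b : Submodule A M}
    (h : DevLT n a b) (hab : a ≤ b) {q : PrimeSpectrum Z}
    (hq : (a.restrictScalars Z).colon (b : Set M) ≤ q.asIdeal) : Order.coheight q < n := by
  induction n generalizing a b q with
  | zero =>
    obtain rfl : a = b := h
    have htop : (a.restrictScalars Z).colon (a : Set M) = ⊤ :=
      (Submodule.colon_eq_top_iff_subset _).2 le_rfl
    exact absurd (top_le_iff.1 (htop.ge.trans hq)) q.2.ne_top
  | succ n ih =>
    have : SMulCommClass Z A M := IsScalarTower.to_smulCommClass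
    rw [Nat.cast_succ, ENat.lt_add_one_iff (ENat.natCast_ne_top n), Order.coheight_le_coe_iff]
    intro q' hqq'
    obtain ⟨s, hsq', hsq⟩ := SetLike.exists_of_lt (show q.asIdeal < q'.asIdeal from hqq')
    have hf := antitone_sup_pow_smul a b s
    obtain ⟨i, hi⟩ := (h _ hf (fun _ => le_sup_left)
      (sup_le hab (Submodule.smul_le_self_of_tower _ _))).exists
    refine ih hi (hf i.le_succ) ?_
    rw [restrictScalars_sup_pow_succ_smul]
    exact colon_sup_smul_le (IsNoetherian.noetherian _)
      ((Ideal.span_singleton_le_iff_mem _).2 hsq') ((colon_sup_pow_smul_le hq hsq i).trans hqq'.le)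

variable [IsNoetherianRing Z] [Module.Finite Z M]

theorem devLT_bot_top_iff {n : ℕ} : DevLT n (⊥ : Submodule A M) ⊤ ↔
    ∀ p ∈ Module.support Z M, Order.coheight p < n := by
  have hcolon : (⊥ : Submodule Z M).colon ((⊤ : Submodule Z M) : Set M) =
      Module.annihilator Z M := Submodule.bot_colon.trans Submodule.annihilator_top
  simp only [Module.mem_support_iff_of_finite, ← hcolon]
  refine ⟨fun h p hp => coheight_lt_of_devLT h bot_le hp, fun h => ?_⟩
  refine .of_map (φ := (Submodule.restrictScalars Z : Submodule A M → Submodule Z M))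
    (fun _ _ hxy => hxy) bot_le
    (fun _ _ _ _ _ hxy => Submodule.restrictScalars_injective Z A M hxy) ?_
  exact devLT_of_coheight_lt (a := (⊥ : Submodule Z M)) (b := ⊤) bot_le h

variable (Z A M) in
theorem moduleKdim_eq_iSup_coheight :
    moduleKdim A M = ⨆ p ∈ Module.support Z M, Order.coheight p := by
  have hdev (m : ℕ) : DevLE m (⊥ : Submodule A M) ⊤ ↔
      ⨆ p ∈ Module.support Z M, Order.coheight p ≤ m := by
    rw [← devLT_succ_iff_devLE, devLT_bot_top_iff (Z := Z), iSup₂_le_iff]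
    simp only [Nat.cast_succ, ENat.lt_add_one_iff (ENat.natCast_ne_top m)]
  refine le_antisymm ?_ (le_sInf ?_)
  · cases hd : ⨆ p ∈ Module.support Z M, Order.coheight p with
    | top => exact le_top
    | coe d => exact sInf_le ⟨d, rfl, (hdev d).2 hd.le⟩
  · rintro _ ⟨m, rfl, hm⟩
    exact (hdev m).1 hm

end Lower

end Support

section RegularSequence

open Pointwise

variable {Z M : Type*} [CommRing Z] [AddCommGroup M] [Module Z M]

theorem quotSMulTop_map_subtype_injective {x : Z} {N : Submodule Z M}
    (hN : ∀ w, x • w ∈ N → w ∈ N) : Function.Injective (QuotSMulTop.map x N.subtype) := by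
  rw [injective_iff_map_eq_zero]
  intro y hy
  obtain ⟨v, rfl⟩ := Submodule.Quotient.mk_surjective _ y
  rw [QuotSMulTop.map_apply_mk, Submodule.Quotient.mk_eq_zero] at hy
  obtain ⟨w, -, hw⟩ := (Submodule.mem_smul_pointwise_iff_exists _ _ _).1 hy
  refine (Submodule.Quotient.mk_eq_zero _).2 ((Submodule.mem_smul_pointwise_iff_exists _ _ _).2 ?_)
  exact ⟨⟨w, hN w (hw ▸ v.2)⟩, trivial, Subtype.ext hw⟩

theorem mem_support_of_mem_associatedPrimes [Module.Finite Z M] {p : PrimeSpectrum Z}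
    (hp : p.asIdeal ∈ associatedPrimes Z M) : p ∈ Module.support Z M := by
  rw [Module.mem_support_iff_of_finite, ← Submodule.annihilator_top]
  exact IsAssociatedPrime.annihilator_le hp

variable [IsNoetherianRing Z] [Module.Finite Z M]

theorem exists_mem_associatedPrimes_le {q : PrimeSpectrum Z} (hq : q ∈ Module.support Z M) :
    ∃ p ∈ associatedPrimes Z M, p ≤ q.asIdeal := by
  obtain ⟨p, hp, hpq⟩ := Ideal.exists_minimalPrimes_le (Module.annihilator_le_of_mem_support hq)
  exact ⟨p, Module.associatedPrimes.minimalPrimes_annihilator_subset_associatedPrimes Z M hp, hpq⟩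

theorem exists_associatedPrimes_quotSMulTop_gt {p m : Ideal Z} [m.IsPrime]
    (hp : p ∈ associatedPrimes Z M) (hpm : p ≤ m) {x : Z} (hxm : x ∈ m) (hx : IsSMulRegular M x) :
    ∃ q ∈ associatedPrimes Z (QuotSMulTop x M), p < q ∧ q ≤ m := by
  obtain ⟨hprime, y, rfl⟩ := isAssociatedPrime_iff.1 hp
  set p := (⊥ : Submodule Z M).colon {y}
  have hmem {z : Z} : z ∈ p ↔ z • y = 0 := Submodule.mem_colon_singleton
  let N := Submodule.torsionBySet Z M (p : Set Z)
  have hN (w : M) (hw : x • w ∈ N) : w ∈ N := by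
    rw [Submodule.mem_torsionBySet_iff] at hw ⊢
    exact fun a => hx.right_eq_zero_of_smul ((smul_comm x (a : Z) w).trans (hw a))
  have hmN : (⟨m, ‹_›⟩ : PrimeSpectrum Z) ∈ Module.support Z N := by
    have hy : y ∈ N := (Submodule.mem_torsionBySet_iff _ _).2 fun a => hmem.1 a.2
    refine Module.mem_support_iff_of_finite.2 (le_trans (fun z hz => hmem.2 ?_) hpm)
    exact congrArg Subtype.val (Module.mem_annihilator.1 hz ⟨y, hy⟩)
  have hmQ : (⟨m, ‹_›⟩ : PrimeSpectrum Z) ∈ Module.support Z (QuotSMulTop x N) := by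
    rw [Module.support_quotSMulTop]
    exact ⟨hmN, by simpa using hxm⟩
  obtain ⟨q, hq, hqm⟩ := exists_mem_associatedPrimes_le hmQ
  have hpN : p ≤ Module.annihilator Z N := fun a ha => Module.mem_annihilator.2 fun w =>
    Subtype.ext ((Submodule.mem_torsionBySet_iff _ _).1 w.2 ⟨a, ha⟩)
  have hann : Module.annihilator Z (QuotSMulTop x N) ≤ q :=
    Submodule.annihilator_top.ge.trans (IsAssociatedPrime.annihilator_le hq)
  have hpq : p ≤ q := (hpN.trans (LinearMap.annihilator_le_of_surjective _
    (Submodule.mkQ_surjective _))).trans hann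
  have hxq : x ∈ q := hann (QuotSMulTop.mem_annihilator _ x)
  have hxp : x ∉ p := fun h => hprime.ne_top <| (Ideal.eq_top_iff_one _).2 <| hmem.2 <|
    (one_smul Z y).trans (hx.right_eq_zero_of_smul (hmem.1 h))
  exact ⟨q, associatedPrimes.subset_of_injective (quotSMulTop_map_subtype_injective hN) hq,
    SetLike.lt_iff_le_and_exists.2 ⟨hpq, x, hxq, hxp⟩, hqm⟩

theorem length_le_coheight_of_isWeaklyRegular {rs : List Z}
    (hrs : RingTheory.Sequence.IsWeaklyRegular M rs) {p : PrimeSpectrum Z} {m : Ideal Z} [m.IsPrime]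
    (hp : p.asIdeal ∈ associatedPrimes Z M) (hpm : p.asIdeal ≤ m) (hm : ∀ x ∈ rs, x ∈ m) :
    rs.length ≤ Order.coheight p := by
  induction rs generalizing M p with
  | nil => simp
  | cons x rs ih =>
    obtain ⟨hx, hrs⟩ := (RingTheory.Sequence.isWeaklyRegular_cons_iff _ _ _).1 hrs
    obtain ⟨q, hq, hpq, hqm⟩ := exists_associatedPrimes_quotSMulTop_gt hp hpm (hm x (by simp)) hx
    have hlt : p < ⟨q, hq.isPrime⟩ := hpq
    have hlen := ih (p := ⟨q, hq.isPrime⟩) hrs hq hqm fun y hy => hm y (by simp [hy])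
    calc ((x :: rs).length : ℕ∞) = rs.length + 1 := by simp
      _ ≤ Order.coheight (⟨q, hq.isPrime⟩ : PrimeSpectrum Z) + 1 := by gcongr
      _ ≤ Order.coheight p := Order.coheight_add_one_le hlt

theorem cGrade_le_coheight {p : PrimeSpectrum Z} (hp : p.asIdeal ∈ associatedPrimes Z M)
    {m : Ideal Z} [m.IsPrime] (hpm : p.asIdeal ≤ m) : cGrade m M ≤ Order.coheight p := by
  refine sSup_le ?_
  rintro _ ⟨rs, rfl, hm, hrs⟩
  exact length_le_coheight_of_isWeaklyRegular hrs.1 hp hpm hm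

end RegularSequence

section PrimeRing

theorem isSemisimpleRing_of_isPrimeTS_bot {B : Type*} [Ring B] [IsArtinianRing B]
    (hB : IsPrimeTS (⊥ : TwoSidedIdeal B)) : IsSemisimpleRing B := by
  rw [IsArtinianRing.isSemisimpleRing_iff_jacobson, Submodule.eq_bot_iff]
  intro x hx
  obtain ⟨n, hn⟩ := IsSemiprimaryRing.isNilpotent (R := B)
  by_contra hx0
  have hpow (k : ℕ) : ∃ y ∈ Ring.jacobson B ^ k, y ≠ 0 := by
    induction k with
    | zero =>
      exact ⟨1, by rw [Submodule.pow_zero, Ideal.one_eq_top]; trivial,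
        fun h => hx0 (by rw [← one_mul x, h, zero_mul])⟩
    | succ k ih =>
      obtain ⟨y, hy, hy0⟩ := ih
      obtain ⟨r, hr⟩ : ∃ r, y * r * x ≠ 0 := by
        by_contra! h
        exact (hB.2 y x h).elim hy0 hx0
      refine ⟨y * (r * x), ?_, mul_assoc y r x ▸ hr⟩
      exact Ideal.mul_mem_mul hy (Ideal.mul_mem_left _ _ hx)
  obtain ⟨y, hy, hy0⟩ := hpow n
  exact hy0 (by simpa [hn] using hy)

theorem isSimpleRing_of_isPrimeTS_bot {B : Type*} [Ring B] [IsArtinianRing B]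
    (hB : IsPrimeTS (⊥ : TwoSidedIdeal B)) : IsSimpleRing B := by
  have := isSemisimpleRing_of_isPrimeTS_bot hB
  have : Nontrivial (TwoSidedIdeal B) := ⟨⊥, ⊤, hB.1⟩
  refine ⟨⟨fun J => or_iff_not_imp_left.2 fun hJ => ?_⟩⟩
  obtain ⟨x, hx, hx0⟩ := SetLike.exists_of_lt (bot_lt_iff_ne_bot.2 hJ)
  obtain ⟨J', hJ'⟩ := exists_isCompl J.asIdeal
  have hbot : J' = ⊥ := by
    refine (Submodule.eq_bot_iff _).2 fun y hy => (hB.2 x y fun r => ?_).resolve_left hx0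
    have hxry : x * r * y ∈ J.asIdeal ⊓ J' :=
      ⟨J.mul_mem_right _ _ (J.mul_mem_right _ _ hx), J'.mul_mem_left _ hy⟩
    rwa [hJ'.inf_eq_bot] at hxry
  have htop : J.asIdeal = ⊤ := by rw [← hJ'.sup_eq_top, hbot, sup_bot_eq]
  exact (TwoSidedIdeal.one_mem_iff J).1 (htop.ge trivial)

open TensorProduct nonZeroDivisors

variable {D A : Type*} [CommRing D] [IsDomain D] [Ring A] [Algebra D A]

theorem includeRight_fractionRing_injective [Module.IsTorsionFree D A] :
    Function.Injective
      (Algebra.TensorProduct.includeRight : A →ₐ[D] FractionRing D ⊗[D] A) := by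
  refine (injective_iff_map_eq_zero _).2 fun a ha => ?_
  obtain ⟨d, hd⟩ := (IsLocalizedModule.eq_zero_iff D⁰
    (TensorProduct.mk D (FractionRing D) A 1)).1 ha
  exact (smul_eq_zero.1 hd).resolve_left (nonZeroDivisors.coe_ne_zero d)

theorem nontrivial_fractionRing_tensorProduct [FaithfulSMul D A] :
    Nontrivial (FractionRing D ⊗[D] A) := by
  refine ⟨1, 0, fun h => ?_⟩
  obtain ⟨d, hd⟩ := (IsLocalizedModule.eq_zero_iff D⁰
    (TensorProduct.mk D (FractionRing D) A 1)).1 h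
  refine nonZeroDivisors.coe_ne_zero d ((FaithfulSMul.algebraMap_eq_zero_iff D A).1 ?_)
  rw [Algebra.algebraMap_eq_smul_one]
  exact hd

theorem isTorsionFree_of_isPrimeTS_bot [FaithfulSMul D A]
    (hA : IsPrimeTS (⊥ : TwoSidedIdeal A)) : Module.IsTorsionFree D A := by
  refine .of_smul_eq_zero fun d a h => ?_
  rw [← FaithfulSMul.algebraMap_eq_zero_iff D A]
  refine hA.2 _ _ fun r => ?_
  rw [TwoSidedIdeal.mem_bot, Algebra.commutes, mul_assoc, ← Algebra.smul_def, h, mul_zero]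

theorem isPrimeTS_bot_fractionRing_tensorProduct [FaithfulSMul D A]
    (hA : IsPrimeTS (⊥ : TwoSidedIdeal A)) :
    IsPrimeTS (⊥ : TwoSidedIdeal (FractionRing D ⊗[D] A)) := by
  have := isTorsionFree_of_isPrimeTS_bot (D := D) hA
  have := nontrivial_fractionRing_tensorProduct (D := D) (A := A)
  let ι : A →ₐ[D] FractionRing D ⊗[D] A := Algebra.TensorProduct.includeRight
  have hι : Function.Injective ι := includeRight_fractionRing_injective
  have hden (x : FractionRing D ⊗[D] A) : ∃ (s : D⁰) (a : A), s • x = ι a := by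
    obtain ⟨⟨a, s⟩, h⟩ := IsLocalizedModule.surj D⁰ (TensorProduct.mk D (FractionRing D) A 1) x
    exact ⟨s, a, h⟩
  have hzero (s : D⁰) (x : FractionRing D ⊗[D] A) (h : s • x = 0) : x = 0 :=
    IsLocalizedModule.smul_injective (TensorProduct.mk D (FractionRing D) A 1) s
      (h.trans (smul_zero s).symm)
  refine ⟨bot_ne_top, fun x y hxy => ?_⟩
  obtain ⟨s, a, ha⟩ := hden x
  obtain ⟨t, b, hb⟩ := hden y
  have hab : a = 0 ∨ b = 0 := hA.2 a b fun r => (map_eq_zero_iff ι hι).1 <| by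
    rw [map_mul, map_mul, ← ha, ← hb, smul_mul_assoc, smul_mul_smul_comm, hxy, smul_zero]
  exact hab.imp (fun h => hzero s x (by rw [ha, h, map_zero]))
    (fun h => hzero t y (by rw [hb, h, map_zero]))

theorem injective_of_isPrimeTS_bot [Module.Finite D A] (hA : IsPrimeTS (⊥ : TwoSidedIdeal A))
    {A' : Type*} [Ring A'] [Algebra D A'] [FaithfulSMul D A'] (g : A →ₐ[D] A') :
    Function.Injective g := by
  have hinj : Function.Injective (algebraMap D A) := by
    refine Function.Injective.of_comp (f := g) ?_
    rw [← AlgHom.coe_toRingHom, ← RingHom.coe_comp, AlgHom.comp_algebraMap]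
    exact FaithfulSMul.algebraMap_injective D A'
  have : FaithfulSMul D A := (faithfulSMul_iff_algebraMap_injective D A).2 hinj
  have : IsArtinianRing (FractionRing D ⊗[D] A) := .of_finite (FractionRing D) _
  have : IsSimpleRing (FractionRing D ⊗[D] A) :=
    isSimpleRing_of_isPrimeTS_bot (isPrimeTS_bot_fractionRing_tensorProduct hA)
  have := nontrivial_fractionRing_tensorProduct (D := D) (A := A')
  have := isTorsionFree_of_isPrimeTS_bot (D := D) hA
  let gK : FractionRing D ⊗[D] A →ₐ[D] FractionRing D ⊗[D] A' :=
    Algebra.TensorProduct.map (AlgHom.id D _) g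
  let ι' : A' →ₐ[D] FractionRing D ⊗[D] A' := Algebra.TensorProduct.includeRight
  have hcomp : ι' ∘ g = gK ∘ Algebra.TensorProduct.includeRight := by
    ext a
    simp [gK, ι']
  refine Function.Injective.of_comp (f := ι') ?_
  rw [hcomp]
  exact gK.toRingHom.injective.comp includeRight_fractionRing_injective

end PrimeRing

section Contraction

variable {C R : Type*} [CommRing C] [Ring R] [Algebra C R]

theorem mem_contractTS {P : TwoSidedIdeal R} {z : C} :
    z ∈ (contractTS P : Ideal C) ↔ algebraMap C R z ∈ P :=
  Iff.rfl

theorem contractTS_mono : Monotone (contractTS : TwoSidedIdeal R → Ideal C) :=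
  fun _ _ hPQ _ hz => hPQ hz

theorem contractTS_eq_top_iff {P : TwoSidedIdeal R} :
    (contractTS P : Ideal C) = ⊤ ↔ P = ⊤ := by
  rw [Ideal.eq_top_iff_one, mem_contractTS, map_one, TwoSidedIdeal.one_mem_iff]

theorem IsPrimeTS.contractTS {P : TwoSidedIdeal R} (hP : IsPrimeTS P) :
    (contractTS P : Ideal C).IsPrime := by
  refine ⟨mt contractTS_eq_top_iff.1 hP.1, fun {x y} hxy => hP.2 _ _ fun r => ?_⟩
  rw [Algebra.commutes, mul_assoc, ← map_mul]
  exact P.mul_mem_left _ _ hxy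

theorem IsPrimeTS.quotient {P : TwoSidedIdeal R} (hP : IsPrimeTS P) :
    IsPrimeTS (⊥ : TwoSidedIdeal (R ⧸ P.asIdeal)) := by
  have hmk {x : R} : Ideal.Quotient.mk P.asIdeal x = 0 ↔ x ∈ P := Ideal.Quotient.eq_zero_iff_mem
  refine ⟨fun h => hP.1 ?_, fun a b hab => ?_⟩
  · rw [← TwoSidedIdeal.one_mem_iff, ← hmk, map_one, ← TwoSidedIdeal.mem_bot, h]
    trivial
  · obtain ⟨a, rfl⟩ := Ideal.Quotient.mk_surjective a
    obtain ⟨b, rfl⟩ := Ideal.Quotient.mk_surjective b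
    simp only [TwoSidedIdeal.mem_bot, hmk] at hab ⊢
    refine hP.2 a b fun r => ?_
    rw [← hmk, map_mul, map_mul]
    exact hab _

theorem contractTS_lt_contractTS [Module.Finite C R] {P Q : TwoSidedIdeal R} (hP : IsPrimeTS P)
    (hPQ : P < Q) : (contractTS P : Ideal C) < contractTS Q := by
  refine (contractTS_mono hPQ.le).lt_of_ne fun hcontract => hPQ.not_ge fun x hx => ?_
  let p : Ideal C := contractTS P
  have : p.IsPrime := hP.contractTS
  let _ : Algebra (C ⧸ p) (R ⧸ P.asIdeal) := Ideal.Quotient.algebraQuotientOfLEComap le_rfl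
  let _ : Algebra (C ⧸ p) (R ⧸ Q.asIdeal) := Ideal.Quotient.algebraQuotientOfLEComap hcontract.le
  have : IsScalarTower C (C ⧸ p) (R ⧸ P.asIdeal) := .of_algebraMap_eq fun _ => rfl
  have : Module.Finite (C ⧸ p) (R ⧸ P.asIdeal) := .of_restrictScalars_finite C _ _
  have : FaithfulSMul (C ⧸ p) (R ⧸ Q.asIdeal) := by
    rw [faithfulSMul_iff_algebraMap_injective]
    exact Ideal.quotientMap_injective' hcontract.ge
  let g : R ⧸ P.asIdeal →ₐ[C ⧸ p] R ⧸ Q.asIdeal :=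
    { Ideal.Quotient.factor (show P.asIdeal ≤ Q.asIdeal from hPQ.le) with
      commutes' := by rintro ⟨z⟩; rfl }
  have hgx : g (Ideal.Quotient.mk _ x) = 0 := Ideal.Quotient.eq_zero_iff_mem.2 hx
  have hg : Function.Injective g := injective_of_isPrimeTS_bot hP.quotient g
  exact Ideal.Quotient.eq_zero_iff_mem.1 ((map_eq_zero_iff g hg).1 hgx)

theorem tsHeight_le_cHeight_contractTS [Module.Finite C R] (P : TwoSidedIdeal R) :
    tsHeight P ≤ cHeight (contractTS P : Ideal C) := by
  refine sSup_le ?_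
  rintro _ ⟨k, rfl, f, hf, hprime, rfl⟩
  exact le_sSup ⟨k, rfl, fun i => contractTS (f i),
    fun i j hij => contractTS_lt_contractTS (hprime i) (hf hij),
    fun i => (hprime i).contractTS, rfl⟩

section GoingUp

theorem exists_maximal_contractTS_le [IsNoetherianRing R] {I : TwoSidedIdeal R} {q : Ideal C}
    (hI : contractTS I ≤ q) :
    ∃ P, I ≤ P ∧ Maximal (fun P => contractTS P ≤ q) P :=
  have : WellFoundedGT (TwoSidedIdeal R) := StrictMono.wellFoundedGT (f := TwoSidedIdeal.asIdeal)
    fun _ _ h => h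
  exists_maximal_ge_of_wellFoundedGT _ I hI

variable {P : TwoSidedIdeal R} {q : Ideal C} [hq : q.IsPrime]

theorem isPrimeTS_of_maximal_contractTS_le (hP : Maximal (fun P => contractTS P ≤ q) P) :
    IsPrimeTS P := by
  have hmax (L : TwoSidedIdeal R) (hPL : P ≤ L) {x : R} (hxL : x ∈ L) (hxP : x ∉ P) :
      ∃ s ∉ q, algebraMap C R s ∈ L := by
    by_contra! h
    exact hxP (hP.2 (fun s hs => by_contra fun hsq => h s hsq hs) hPL hxL)
  refine ⟨fun htop => hq.ne_top (top_le_iff.1 ?_), fun a b hab => ?_⟩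
  · exact (contractTS_eq_top_iff.2 htop).ge.trans hP.1
  by_contra! hnot
  let L₁ : TwoSidedIdeal R := .mk' {x | ∀ r, x * r * b ∈ P} (fun r => by simp [P.zero_mem])
    (fun hx hy r => by rw [add_mul, add_mul]; exact P.add_mem (hx r) (hy r))
    (fun hx r => by rw [neg_mul, neg_mul]; exact P.neg_mem (hx r))
    (fun hy r => by rw [mul_assoc _ _ r, mul_assoc]; exact P.mul_mem_left _ _ (hy r))
    (fun hx r => by rw [mul_assoc _ _ r]; exact hx _)
  have hL₁ {x : R} : x ∈ L₁ ↔ ∀ r, x * r * b ∈ P := TwoSidedIdeal.mem_mk' ..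
  obtain ⟨s, hsq, hs⟩ := hmax L₁
    (fun x hx => hL₁.2 fun r => P.mul_mem_right _ _ (P.mul_mem_right _ _ hx)) (hL₁.2 hab) hnot.1
  let L₂ : TwoSidedIdeal R := .mk' {x | s • x ∈ P} (by simp [P.zero_mem])
    (fun hx hy => by simpa only [Set.mem_ofPred_eq, smul_add] using P.add_mem hx hy)
    (fun hx => by simpa only [Set.mem_ofPred_eq, smul_neg] using P.neg_mem hx)
    (fun {x y} hy => by
      simpa only [Set.mem_ofPred_eq, mul_smul_comm] using P.mul_mem_left x _ hy)
    (fun {x y} hx => by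
      simpa only [Set.mem_ofPred_eq, smul_mul_assoc] using P.mul_mem_right _ y hx)
  have hL₂ {x : R} : x ∈ L₂ ↔ s • x ∈ P := TwoSidedIdeal.mem_mk' ..
  obtain ⟨t, htq, ht⟩ := hmax L₂
    (fun x hx => hL₂.2 (by rw [Algebra.smul_def]; exact P.mul_mem_left _ _ hx))
    (hL₂.2 (by simpa [Algebra.smul_def] using hL₁.1 hs 1)) hnot.2
  rw [hL₂, Algebra.smul_def, ← map_mul] at ht
  exact (hq.mem_or_mem (hP.1 ht)).elim hsq htq

variable [Module.Finite C R]

theorem contractTS_eq_of_maximal_contractTS_le (hP : Maximal (fun P => contractTS P ≤ q) P) :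
    contractTS P = q := by
  refine hP.1.antisymm fun z hz => ?_
  let L : TwoSidedIdeal R := .mk' {x | ∃ y, x - z • y ∈ P} ⟨0, by simp [P.zero_mem]⟩
    (fun {x x'} ⟨y, hy⟩ ⟨y', hy'⟩ => ⟨y + y', by
      rw [smul_add, add_sub_add_comm]; exact P.add_mem hy hy'⟩)
    (fun {x} ⟨y, hy⟩ => ⟨-y, by rw [smul_neg, ← neg_sub']; exact P.neg_mem hy⟩)
    (fun {r x} ⟨y, hy⟩ => ⟨r * y, by
      rw [← mul_smul_comm, ← mul_sub]; exact P.mul_mem_left _ _ hy⟩)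
    (fun {x r} ⟨y, hy⟩ => ⟨y * r, by
      rw [← smul_mul_assoc, ← sub_mul]; exact P.mul_mem_right _ _ hy⟩)
  have hL {x : R} : x ∈ L ↔ ∃ y, x - z • y ∈ P := TwoSidedIdeal.mem_mk' ..
  have hLq : contractTS L ≤ q := by
    have hPq : (P.asIdeal.restrictScalars C).colon ((⊤ : Submodule C R) : Set R) ≤ q :=
      fun t ht => hP.1 <| mem_contractTS.2 <| by
        rw [Algebra.algebraMap_eq_smul_one]
        exact Submodule.mem_colon.1 ht 1 trivial
    refine le_trans (fun t ht => ?_)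
      (colon_sup_smul_le Module.Finite.fg_top ((Ideal.span_singleton_le_iff_mem q).2 hz) hPq)
    refine Submodule.mem_colon.2 fun x _ => ?_
    obtain ⟨y, hy⟩ := hL.1 (L.mul_mem_right _ x (mem_contractTS.1 ht))
    rw [Algebra.smul_def t x, ← sub_add_cancel (algebraMap C R t * x) (z • y)]
    exact Submodule.add_mem_sup hy
      (Submodule.smul_mem_smul (Ideal.mem_span_singleton_self z) trivial)
  refine hP.2 hLq (fun x hx => hL.2 ⟨0, by simpa using hx⟩) (hL.2 ⟨1, ?_⟩)
  simp [Algebra.algebraMap_eq_smul_one, P.zero_mem]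

variable [IsNoetherianRing R]

theorem exists_isPrimeTS_contractTS_eq {I : TwoSidedIdeal R} (hI : contractTS I ≤ q) :
    ∃ P, I ≤ P ∧ IsPrimeTS P ∧ contractTS P = q :=
  have ⟨P, hIP, hP⟩ := exists_maximal_contractTS_le hI
  ⟨P, hIP, isPrimeTS_of_maximal_contractTS_le hP, contractTS_eq_of_maximal_contractTS_le hP⟩

theorem exists_isMaximalTS_contractTS_eq {m : Ideal C} [hm : m.IsMaximal]
    (hbot : contractTS (⊥ : TwoSidedIdeal R) ≤ m) :
    ∃ M : TwoSidedIdeal R, IsMaximalTS M ∧ contractTS M = m := by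
  obtain ⟨M, -, hM⟩ := exists_maximal_contractTS_le hbot
  have hMm := contractTS_eq_of_maximal_contractTS_le hM
  refine ⟨M, ⟨(isPrimeTS_of_maximal_contractTS_le hM).1, fun J hJ => ?_⟩, hMm⟩
  have hlt : m < contractTS J :=
    (hMm.ge.trans (contractTS_mono hJ.le)).lt_of_not_ge (hM.not_prop_of_gt hJ)
  exact contractTS_eq_top_iff.1 (hm.out.2 _ hlt)

end GoingUp

end Contraction

section EakinNagata

open Pointwise

theorem isNoetherian_of_forall_exists_fg_le {A M : Type*} [Ring A] [AddCommGroup M] [Module A M]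
    (h : ∀ L : Submodule A M, L ≠ ⊥ → ∃ K ≤ L, K.FG ∧ IsNoetherian A (M ⧸ K)) :
    IsNoetherian A M := by
  refine ⟨fun L => ?_⟩
  obtain rfl | hL := eq_or_ne L ⊥
  · exact Submodule.fg_bot
  obtain ⟨K, hKL, hK, hMK⟩ := h L hL
  refine Submodule.fg_of_fg_map_of_fg_inf_ker K.mkQ (IsNoetherian.noetherian _) ?_
  rwa [Submodule.ker_mkQ, inf_eq_right.2 hKL]

variable {Z M : Type*} [CommRing Z] [AddCommGroup M] [Module Z M]

theorem isNoetherian_quotient_annihilator [IsNoetherian Z M] :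
    IsNoetherian Z (Z ⧸ Module.annihilator Z M) := by
  obtain ⟨s, hs⟩ := IsNoetherian.noetherian (⊤ : Submodule Z M)
  let φ : Z →ₗ[Z] s → M := LinearMap.pi fun x => LinearMap.toSpanSingleton Z M x
  have hφ : LinearMap.ker φ = Module.annihilator Z M := by
    rw [← Submodule.annihilator_top, ← hs]
    ext z
    simp [φ, funext_iff, Submodule.mem_annihilator_span]
  exact hφ ▸ isNoetherian_of_linearEquiv φ.quotKerEquivRange.symm

theorem isNoetherian_of_annihilator_le {N : Type*} [AddCommGroup N] [Module Z N]
    [IsNoetherian Z N] [Module.Finite Z M] (h : Module.annihilator Z N ≤ Module.annihilator Z M) :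
    IsNoetherian Z M := by
  have := isNoetherian_quotient_annihilator (Z := Z) (M := N)
  obtain ⟨s, hs⟩ := (Module.Finite.fg_top : (⊤ : Submodule Z M).FG)
  have hspan (y : M) : IsNoetherian Z (Submodule.span Z {y}) := by
    have hker : Module.annihilator Z N ≤ LinearMap.ker (LinearMap.toSpanSingleton Z M y) :=
      fun z hz => Module.mem_annihilator.1 (h hz) y
    rw [LinearMap.span_singleton_eq_range, ← Submodule.range_liftQ _ _ hker]
    infer_instance
  rw [← isNoetherian_top_iff, ← hs, Submodule.span_eq_iSup_of_singleton_spans, iSup_subtype']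
  exact isNoetherian_iSup

theorem mem_annihilator_quotient_iff {N : Submodule Z M} {z : Z} :
    z ∈ Module.annihilator Z (M ⧸ N) ↔ z • ⊤ ≤ N := by
  rw [Submodule.annihilator_quotient, Submodule.mem_colon]
  exact ⟨by rintro h _ ⟨x, -, rfl⟩; exact h x trivial,
    fun h x _ => h (Submodule.smul_mem_pointwise_smul x z ⊤ trivial)⟩

theorem exists_maximal_annihilator_quotient_le [Module.Finite Z M] :
    ∃ N : Submodule Z M,
      Maximal (fun N => Module.annihilator Z (M ⧸ N) ≤ Module.annihilator Z M) N := by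
  refine (zorn_le_nonempty₀
    {N : Submodule Z M | Module.annihilator Z (M ⧸ N) ≤ Module.annihilator Z M}
    (fun c hc hchain N hN => ⟨sSup c, fun z hz => ?_, fun _ => le_sSup⟩) ⊥
    (Submodule.quotEquivOfEqBot (⊥ : Submodule Z M) rfl).annihilator_eq.le).imp fun _ h => h.2
  have hcompact := (Submodule.fg_iff_compact (z • ⊤ : Submodule Z M)).1
    (Module.Finite.fg_top.map (LinearMap.lsmul Z M z))
  obtain ⟨N', hN', hle⟩ := (CompleteLattice.isCompactElement_iff_le_of_directed_sSup_le _ _).1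
    hcompact c ⟨N, hN⟩ hchain.directedOn (mem_annihilator_quotient_iff.1 hz)
  exact hc hN' (mem_annihilator_quotient_iff.2 hle)

theorem isNoetherian_of_forall_quotSMulTop [Module.Finite Z M]
    (h : ∀ z ∉ Module.annihilator Z M, IsNoetherian Z (QuotSMulTop z M)) : IsNoetherian Z M := by
  obtain ⟨N, hN⟩ := exists_maximal_annihilator_quotient_le (Z := Z) (M := M)
  suffices IsNoetherian Z (M ⧸ N) from isNoetherian_of_annihilator_le hN.1
  refine isNoetherian_of_forall_exists_fg_le fun L hL => ?_
  have hlt : N < L.comap N.mkQ := by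
    refine (Submodule.le_comap_mkQ N L).lt_of_ne fun hNL => hL ?_
    rw [← Submodule.map_comap_eq_of_surjective N.mkQ_surjective L, ← hNL, Submodule.mkQ_map_self]
  obtain ⟨z, hz, hzM⟩ := SetLike.not_le_iff_exists.1 (hN.not_prop_of_gt hlt)
  have := h z hzM
  refine ⟨z • ⊤, ?_, Module.Finite.fg_top.map (LinearMap.lsmul Z (M ⧸ N) z), ?_⟩
  · rintro _ ⟨y, -, rfl⟩
    obtain ⟨x, rfl⟩ := N.mkQ_surjective y
    exact mem_annihilator_quotient_iff.1 hz (Submodule.smul_mem_pointwise_smul x z ⊤ trivial)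
  · exact isNoetherian_of_surjective _ (LinearMap.range_eq_top.2
      (QuotSMulTop.map_surjective z N.mkQ_surjective))

theorem isNoetherian_of_finite_of_isNoetherian (A : Type*) [Ring A] [Algebra Z A] [Module A M]
    [IsScalarTower Z A M] [IsNoetherian A M] [Module.Finite Z M] : IsNoetherian Z M := by
  suffices h : ∀ N : Submodule A M, IsNoetherian Z (M ⧸ N.restrictScalars Z) by
    have := h ⊥
    exact isNoetherian_of_linearEquiv
      (Submodule.quotEquivOfEqBot _ (Submodule.restrictScalars_bot Z A M))
  refine IsNoetherian.induction fun N ih => isNoetherian_of_forall_quotSMulTop fun z hz => ?_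
  rw [mem_annihilator_quotient_iff] at hz
  have hlt : N < N ⊔ z • ⊤ := by
    refine left_lt_sup.2 fun hle => hz ?_
    rintro _ ⟨x, -, rfl⟩
    exact hle (Submodule.smul_mem_pointwise_smul x z ⊤ trivial)
  have := ih _ hlt
  let g : M →ₗ[Z] QuotSMulTop z (M ⧸ N.restrictScalars Z) :=
    (Submodule.mkQ _).comp (Submodule.mkQ _)
  have hg : (N ⊔ z • ⊤).restrictScalars Z ≤ LinearMap.ker g := by
    rw [Submodule.restrictScalars_sup, sup_le_iff]
    refine ⟨fun x hx => ?_, ?_⟩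
    · simp [g, (Submodule.Quotient.mk_eq_zero (N.restrictScalars Z)).2 hx]
    · rintro _ ⟨x, -, rfl⟩
      exact (Submodule.Quotient.mk_eq_zero _).2
        (Submodule.smul_mem_pointwise_smul (Submodule.Quotient.mk x) z ⊤ trivial)
  refine isNoetherian_of_surjective (Submodule.liftQ _ g hg) ?_
  rw [Submodule.range_liftQ, LinearMap.range_eq_top]
  exact (Submodule.mkQ_surjective _).comp (Submodule.mkQ_surjective _)

theorem isNoetherianRing_of_finite_of_faithfulSMul {R : Type*} [Ring R] [Algebra Z R]
    [FaithfulSMul Z R] [Module.Finite Z R] [IsNoetherianRing R] : IsNoetherianRing Z := by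
  have := isNoetherian_of_finite_of_isNoetherian (Z := Z) (M := R) R
  refine isNoetherian_of_annihilator_le (N := R) ?_
  rw [Module.annihilator_eq_bot.2 ‹_›]
  exact bot_le

end EakinNagata

section Homogeneity

variable {C R : Type*} [CommRing C] [Ring R] [Algebra C R]

theorem coheight_le_tsKdim (P : {P : TwoSidedIdeal R // IsPrimeTS P}) :
    Order.coheight P ≤ tsKdim R :=
  Order.coheight_le fun s _ => calc
    (s.length : ℕ∞) ≤ tsHeight s.last.1 :=
      le_sSup ⟨s.length, rfl, fun i => (s i).1, s.strictMono, fun i => (s i).2, rfl⟩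
    _ ≤ tsKdim R := le_iSup (fun P : {P : TwoSidedIdeal R // IsPrimeTS P} => tsHeight P.1) s.last

theorem contractTS_bot_le_of_mem_support {q : PrimeSpectrum C} (hq : q ∈ Module.support C R) :
    contractTS (⊥ : TwoSidedIdeal R) ≤ q.asIdeal := by
  refine le_trans (fun z hz => ?_) (Module.annihilator_le_of_mem_support hq)
  rw [mem_contractTS, TwoSidedIdeal.mem_bot] at hz
  exact Module.mem_annihilator.2 fun r => by rw [Algebra.smul_def, hz, zero_mul]

variable [IsNoetherianRing C] [Module.Finite C R]

theorem coheight_le_tsKdim_of_mem_support {q : PrimeSpectrum C} (hq : q ∈ Module.support C R) :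
    Order.coheight q ≤ tsKdim R := by
  have : IsNoetherianRing R := .of_finite C R
  let f (P : {P : TwoSidedIdeal R // IsPrimeTS P}) : PrimeSpectrum C :=
    ⟨contractTS P.1, P.2.contractTS⟩
  have hf : StrictMono f := fun P Q hPQ => contractTS_lt_contractTS P.2 hPQ
  obtain ⟨P, -, hP, hPq⟩ := exists_isPrimeTS_contractTS_eq (contractTS_bot_le_of_mem_support hq)
  obtain rfl : f ⟨P, hP⟩ = q := PrimeSpectrum.ext hPq
  rw [← Order.coheight_eq_of_strictMono f hf]
  · exact coheight_le_tsKdim _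
  · intro Q q hQq
    obtain ⟨Q', hQQ', hQ', hQ'q⟩ := exists_isPrimeTS_contractTS_eq (q := q.asIdeal) hQq.le
    obtain rfl : f ⟨Q', hQ'⟩ = q := PrimeSpectrum.ext hQ'q
    exact ⟨⟨Q', hQ'⟩, lt_of_le_of_ne hQQ' fun h => hQq.ne (congrArg f h), rfl⟩

theorem tsKdim_le_coheight_of_mem_associatedPrimes (hCM : IsMaximalCohenMacaulay C R)
    (hequi : ∀ M : TwoSidedIdeal R, IsMaximalTS M → tsHeight M = tsKdim R)
    {p : PrimeSpectrum C} (hp : p.asIdeal ∈ associatedPrimes C R) :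
    tsKdim R ≤ Order.coheight p := by
  have : IsNoetherianRing R := .of_finite C R
  obtain ⟨m, hm, hpm⟩ := p.asIdeal.exists_le_maximal p.isPrime.ne_top
  have hbot : contractTS (⊥ : TwoSidedIdeal R) ≤ m :=
    (contractTS_bot_le_of_mem_support (mem_support_of_mem_associatedPrimes hp)).trans hpm
  obtain ⟨M, hM, rfl⟩ := exists_isMaximalTS_contractTS_eq hbot
  calc tsKdim R = tsHeight M := (hequi M hM).symm
    _ ≤ cHeight (contractTS M) := tsHeight_le_cHeight_contractTS M
    _ = cGrade (contractTS M) R := (hCM _ hm).symm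
    _ ≤ Order.coheight p := cGrade_le_coheight hp hpm

variable {A N : Type*} [Ring A] [Algebra C A] [AddCommGroup N] [Module C N] [Module A N]
  [IsScalarTower C A N]

theorem moduleKdim_eq_tsKdim_of_injective (hCM : IsMaximalCohenMacaulay C R)
    (hequi : ∀ M : TwoSidedIdeal R, IsMaximalTS M → tsHeight M = tsKdim R) [Nontrivial N]
    (φ : N →ₗ[C] R) (hφ : Function.Injective φ) :
    moduleKdim A N = tsKdim R := by
  have : Module.Finite C N := .of_injective φ hφ
  rw [moduleKdim_eq_iSup_coheight C]
  refine le_antisymm (iSup₂_le fun q hq => ?_) ?_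
  · exact coheight_le_tsKdim_of_mem_support (Module.support_subset_of_injective φ hφ hq)
  · obtain ⟨p, hp⟩ := associatedPrimes.nonempty C N
    obtain ⟨p, rfl⟩ : ∃ p' : PrimeSpectrum C, p'.asIdeal = p := ⟨⟨p, hp.isPrime⟩, rfl⟩
    exact (tsKdim_le_coheight_of_mem_associatedPrimes hCM hequi
      (associatedPrimes.subset_of_injective hφ hp)).trans
      (le_iSup₂_of_le p (mem_support_of_mem_associatedPrimes hp) le_rfl)

theorem moduleKdim_submodule_eq_of_injective (hCM : IsMaximalCohenMacaulay C R)
    (hequi : ∀ M : TwoSidedIdeal R, IsMaximalTS M → tsHeight M = tsKdim R) (φ : N →ₗ[C] R)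
    (hφ : Function.Injective φ) {I : Submodule A N} (hI : I ≠ ⊥) :
    moduleKdim A I = moduleKdim A N := by
  have : Nontrivial I := Submodule.nontrivial_iff_ne_bot.2 hI
  have : Nontrivial N := I.subtype_injective.nontrivial
  rw [moduleKdim_eq_tsKdim_of_injective hCM hequi φ hφ,
    moduleKdim_eq_tsKdim_of_injective hCM hequi (φ ∘ₗ I.subtype.restrictScalars C)
      (hφ.comp I.subtype_injective)]

theorem krull_homogeneous_of_equicodimensional_macaulay_general (C R : Type*) [CommRing C]
    [IsNoetherianRing C] [Ring R] [Algebra C R] [Module.Finite C R]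
    (hCM : IsMaximalCohenMacaulay C R)
    (hequi : ∀ M : TwoSidedIdeal R, IsMaximalTS M → tsHeight M = tsKdim R) :
    (∀ I : Ideal R, I ≠ ⊥ → moduleKdim R I = moduleKdim R R) ∧
    (∀ I : Ideal Rᵐᵒᵖ, I ≠ ⊥ → moduleKdim Rᵐᵒᵖ I = moduleKdim Rᵐᵒᵖ Rᵐᵒᵖ) :=
  let e : Rᵐᵒᵖ ≃ₗ[C] R := (MulOpposite.opLinearEquiv C).symm
  ⟨fun _ hI => moduleKdim_submodule_eq_of_injective hCM hequi LinearMap.id Function.injective_id hI,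
    fun _ hI => moduleKdim_submodule_eq_of_injective hCM hequi e.toLinearMap e.injective hI⟩

end Homogeneity

/-- Let `R` be an equicodimensional noetherian ring which is a finite module over its
centre `Z(R)` and is `Z(R)`-Macaulay.  Then `R` is Krull homogeneous: every nonzero
right or left ideal `I` of `R` satisfies `Kdim I = Kdim R`. -/
theorem krull_homogeneous_of_equicodimensional_macaulay (R : Type*) [Ring R]
    [IsNoetherianRing R] [Module.Finite (Subring.center R) R]
    (hCM : IsMaximalCohenMacaulay (Subring.center R) R)
    (hequi : ∀ M : TwoSidedIdeal R, IsMaximalTS M → tsHeight M = tsKdim R) :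
    (∀ I : Ideal R, I ≠ ⊥ → moduleKdim R I = moduleKdim R R) ∧
    (∀ I : Ideal Rᵐᵒᵖ, I ≠ ⊥ → moduleKdim Rᵐᵒᵖ I = moduleKdim Rᵐᵒᵖ Rᵐᵒᵖ) := by
  have : IsNoetherianRing (Subring.center R) :=
    isNoetherianRing_of_finite_of_faithfulSMul (R := R)
  exact krull_homogeneous_of_equicodimensional_macaulay_general (Subring.center R) R hCM hequi
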